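/- Let g : ℝ → ℝ be a concave function such that g(x) + |x|/2 converges to a finite limit as x → +∞ and to a finite limit as x → −∞ (as holds for the potential g(x) = G(−x/2, x/2) obtained from the degree-1 homogeneous potential G of a PL map of the line). Then the associated measure μ_g is a finite measure on ℝ of total mass exactly 1. -/

import Mathlib

/-!
Test `μ` against the rescaled bumps `x ↦ ψ (c x)`, where `0 ≤ ψ ≤ 1`, `ψ = 1` near `0`, and
`c → 0⁺`. Write `g = h - |x| / 2`. The kernel `|x| / 2` is a fundamental solution of the second
derivative, so it contributes exactly `ψ 0 = 1` (`integral_abs_mul_deriv_deriv`). The remainder `h`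
is continuous with finite limits at `±∞`, hence bounded, and its contribution is
`O(c)`, since the second derivative of the rescaled bump has `L¹` norm `c ‖ψ''‖₁`
(`abs_pairing_sub_one_le`). Hence `∫ ψ (c x) ∂μ → 1`.

No local finiteness of `μ` is assumed, but these integrals are eventually nonzero, so the bumps are
eventually `μ`-integrable and the Bochner integrals agree with the lower Lebesgue ones. The bound
`ψ ≤ 1` then gives `1 ≤ μ univ`, and Fatou's lemma gives `μ univ ≤ 1`.
-/

open MeasureTheory Filter

/-- In the sense of distributions, `|x|'' = 2 δ₀`. -/
lemma integral_abs_mul_deriv_deriv (ψ : ℝ → ℝ) (hψ : ContDiff ℝ (⊤ : ℕ∞) ψ)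
    (hc : HasCompactSupport ψ) : ∫ x, |x| * deriv (deriv ψ) x = 2 * ψ 0 := by
  have h1 : ContDiff ℝ (⊤ : ℕ∞) (deriv ψ) := (contDiff_infty_iff_deriv.1 hψ).2
  have h2 : ContDiff ℝ (⊤ : ℕ∞) (deriv (deriv ψ)) := (contDiff_infty_iff_deriv.1 h1).2
  -- `x ψ' - ψ` is a primitive of `x ψ''`.
  set F : ℝ → ℝ := fun x => x * deriv ψ x - ψ x with hF
  have hFc : ContDiff ℝ 1 F :=
    ((contDiff_id.mul h1).sub hψ).of_le (by exact_mod_cast le_top)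
  have hFs : HasCompactSupport F := (hc.deriv.mul_left (f := fun x => x)).sub hc
  have hFd : ∀ x, deriv F x = x * deriv (deriv ψ) x := by
    intro x
    have a := (h1.differentiable (by simp) x).hasDerivAt
    have b := (hψ.differentiable (by simp) x).hasDerivAt
    have := ((hasDerivAt_id x).mul a).sub b
    have h := this.deriv
    simp only [id, one_mul] at h
    rw [show F = (fun x => x) * deriv ψ - ψ from rfl]
    exact h.trans (by ring)
  have hint : Integrable (fun x => |x| * deriv (deriv ψ) x) :=
    (continuous_abs.mul h2.continuous).integrable_of_hasCompactSupport hc.deriv.deriv.mul_left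
  have e1 : ∫ x in Set.Ioi (0:ℝ), |x| * deriv (deriv ψ) x = ψ 0 := by
    have := hFs.integral_Ioi_deriv_eq hFc 0
    rw [setIntegral_congr_fun measurableSet_Ioi
      (g := deriv F) (fun x hx => by simp only [hFd, abs_of_pos (Set.mem_Ioi.1 hx)]), this]
    simp [hF]
  have e2 : ∫ x in Set.Iic (0:ℝ), |x| * deriv (deriv ψ) x = ψ 0 := by
    have := hFs.integral_Iic_deriv_eq hFc 0
    rw [setIntegral_congr_fun measurableSet_Iic
      (g := fun x => - deriv F x) (fun x hx => by
        simp only [hFd, abs_of_nonpos (Set.mem_Iic.1 hx)]; ring), integral_neg, this]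
    simp [hF]
  have := intervalIntegral.integral_Iic_add_Ioi (b := (0:ℝ)) hint.integrableOn hint.integrableOn
  linarith

/-- A continuous function with finite limits at both ends of the line is bounded. -/
lemma exists_bound_of_tendsto (h : ℝ → ℝ) (hh : Continuous h) (L₁ L₂ : ℝ)
    (htop : Tendsto h atTop (nhds L₁)) (hbot : Tendsto h atBot (nhds L₂)) :
    ∃ C, ∀ x, |h x| ≤ C := by
  obtain ⟨a, ha⟩ := eventually_atTop.1 (htop.abs.eventually_le_const (lt_add_one |L₁|))
  obtain ⟨b, hb⟩ := eventually_atBot.1 (hbot.abs.eventually_le_const (lt_add_one |L₂|))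
  obtain ⟨K, hK⟩ := (isCompact_Icc (a := b) (b := a)).exists_bound_of_continuousOn hh.continuousOn
  refine ⟨max K (max (|L₁| + 1) (|L₂| + 1)), fun x => ?_⟩
  rcases le_total a x with h1 | h1
  · exact (ha x h1).trans (by simp)
  rcases le_total x b with h2 | h2
  · exact (hb x h2).trans (by simp)
  · exact (hK x ⟨h2, h1⟩).trans (le_max_left _ _)

/-- Pairing with the bump rescaled by `c` costs at most `O(c)` against the exact value `1`
given by `-|x| / 2`. -/
lemma abs_pairing_sub_one_le (g : ℝ → ℝ) (hg : Continuous g) (C : ℝ)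
    (hC : ∀ x, |g x + |x| / 2| ≤ C) (ψ : ℝ → ℝ) (hψ : ContDiff ℝ (⊤ : ℕ∞) ψ)
    (hc : HasCompactSupport ψ) (h0 : ψ 0 = 1) (c : ℝ) (hcpos : 0 < c) :
    |(-∫ x, g x * deriv (deriv fun y => ψ (c * y)) x) - 1|
      ≤ c * (C * ∫ x, |deriv (deriv ψ) x|) := by
  set f : ℝ → ℝ := fun y => ψ (c * y) with hf
  have hfs : ContDiff ℝ (⊤ : ℕ∞) f := hψ.comp (contDiff_const.mul contDiff_id)
  have hfc : HasCompactSupport f :=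
    hc.comp_homeomorph (Homeomorph.mulLeft₀ c hcpos.ne')
  have h1 : ContDiff ℝ (⊤ : ℕ∞) (deriv f) := (contDiff_infty_iff_deriv.1 hfs).2
  have h2 : Continuous (deriv (deriv f)) := (contDiff_infty_iff_deriv.1 h1).2.continuous
  have hd : ∀ x, deriv (deriv f) x = c ^ 2 * deriv (deriv ψ) (c * x) := by
    intro x
    have e : deriv f = fun x => c * deriv ψ (c * x) := by
      funext x
      simpa using deriv_comp_mul_left c ψ x
    rw [e, deriv_const_mul_field, deriv_comp_mul_left c (deriv ψ) x]
    simp; ring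
  have i1 : Integrable (fun x => (g x + |x| / 2) * deriv (deriv f) x) :=
    ((hg.add (continuous_abs.div_const 2)).mul h2).integrable_of_hasCompactSupport
      hfc.deriv.deriv.mul_left
  have i2 : Integrable (fun x => |x| * deriv (deriv f) x) :=
    (continuous_abs.mul h2).integrable_of_hasCompactSupport hfc.deriv.deriv.mul_left
  have i3 : Integrable (fun x => |deriv (deriv f) x|) :=
    (h2.integrable_of_hasCompactSupport hfc.deriv.deriv).abs
  have key : ∫ x, g x * deriv (deriv f) x
      = (∫ x, (g x + |x| / 2) * deriv (deriv f) x) - 1 := by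
    have e : ∀ x, g x * deriv (deriv f) x
        = (g x + |x| / 2) * deriv (deriv f) x - 1 / 2 * (|x| * deriv (deriv f) x) := by
      intro x; ring
    simp_rw [e]
    rw [integral_sub i1 (i2.const_mul _), integral_const_mul,
      integral_abs_mul_deriv_deriv f hfs hfc]
    simp [hf, h0]
  have hL1 : ∫ x, |deriv (deriv f) x| = c * ∫ x, |deriv (deriv ψ) x| := by
    simp_rw [hd, abs_mul]
    rw [integral_const_mul, Measure.integral_comp_mul_left (fun x => |deriv (deriv ψ) x|) c,
      abs_of_pos (inv_pos.2 hcpos), abs_of_nonneg (sq_nonneg c), smul_eq_mul]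
    field_simp
  rw [key, show (-((∫ x, (g x + |x| / 2) * deriv (deriv f) x) - 1) - 1)
    = -(∫ x, (g x + |x| / 2) * deriv (deriv f) x) by ring, abs_neg]
  calc |∫ x, (g x + |x| / 2) * deriv (deriv f) x|
      ≤ ∫ x, |(g x + |x| / 2) * deriv (deriv f) x| := abs_integral_le_integral_abs
    _ ≤ ∫ x, C * |deriv (deriv f) x| := by
        refine integral_mono i1.abs (i3.const_mul C) fun x => ?_
        simp only [abs_mul]
        exact mul_le_mul_of_nonneg_right (hC x) (abs_nonneg _)
    _ = c * (C * ∫ x, |deriv (deriv ψ) x|) := by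
        rw [integral_const_mul, hL1]; ring

/-- If `g : ℝ → ℝ` is concave and `g(x) + |x|/2` converges to finite limits
as `x → +∞` and as `x → −∞` (as for the potential of a PL map of the line), then the
associated second-derivative measure `μ_g` is a finite measure of total mass exactly 1. -/
theorem stmt_13 (g : ℝ → ℝ) (hg : ConcaveOn ℝ Set.univ g)
    (L₁ L₂ : ℝ)
    (htop : Tendsto (fun x => g x + |x| / 2) atTop (nhds L₁))
    (hbot : Tendsto (fun x => g x + |x| / 2) atBot (nhds L₂))
    (μ : Measure ℝ)
    (hμ : ∀ φ : ℝ → ℝ, ContDiff ℝ (⊤ : ℕ∞) φ → HasCompactSupport φ →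
      ∫ x, φ x ∂μ = -∫ x, g x * deriv (deriv φ) x) :
    μ Set.univ = 1 := by
  have hgc : Continuous g := by
    simpa [continuousOn_univ] using hg.continuousOn isOpen_univ
  obtain ⟨C, hC⟩ := exists_bound_of_tendsto _ (hgc.add (continuous_abs.div_const 2)) L₁ L₂ htop hbot
  let ψ : ContDiffBump (0 : ℝ) := ⟨1, 2, one_pos, one_lt_two⟩
  have hψ : ContDiff ℝ (⊤ : ℕ∞) ψ := ψ.contDiff
  have hψ1 : ∀ x : ℝ, |x| ≤ 1 → ψ x = 1 := fun x hx =>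
    ψ.one_of_mem_closedBall (by simpa [ψ] using hx)
  let c : ℕ → ℝ := fun n => 1 / ((n : ℝ) + 1)
  have hcpos : ∀ n, 0 < c n := fun n => by positivity
  have hc0 : Tendsto c atTop (nhds 0) := tendsto_one_div_add_atTop_nhds_zero_nat
  let f : ℕ → ℝ → ℝ := fun n x => ψ (c n * x)
  have hfs : ∀ n, ContDiff ℝ (⊤ : ℕ∞) (f n) := fun n =>
    hψ.comp (contDiff_const.mul contDiff_id)
  have hfc : ∀ n, HasCompactSupport (f n) := fun n =>
    ψ.hasCompactSupport.comp_homeomorph (Homeomorph.mulLeft₀ (c n) (hcpos n).ne')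
  have hlim : Tendsto (fun n => ∫ x, f n x ∂μ) atTop (nhds 1) := by
    rw [tendsto_iff_dist_tendsto_zero]
    refine squeeze_zero (fun _ => dist_nonneg) (fun n => ?_)
      (by simpa using hc0.mul_const (C * ∫ x, |deriv (deriv ψ) x|))
    rw [Real.dist_eq, hμ _ (hfs n) (hfc n)]
    exact abs_pairing_sub_one_le g hgc C hC ψ hψ ψ.hasCompactSupport (hψ1 0 (by simp)) _ (hcpos n)
  -- A non-integrable bump would have Bochner integral `0`.
  have hlint : ∀ᶠ n in atTop,
      ENNReal.ofReal (∫ x, f n x ∂μ) = ∫⁻ x, ENNReal.ofReal (f n x) ∂μ := by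
    filter_upwards [hlim.eventually_ne one_ne_zero] with n hn
    refine ofReal_integral_eq_lintegral_ofReal ?_ (ae_of_all _ fun x => ψ.nonneg)
    by_contra h
    exact hn (integral_undef h)
  have hlim' : Tendsto (fun n => ∫⁻ x, ENNReal.ofReal (f n x) ∂μ) atTop (nhds 1) := by
    refine Tendsto.congr' hlint ?_
    simpa using ENNReal.tendsto_ofReal hlim
  apply le_antisymm
  · have hpt : ∀ x, liminf (fun n => ENNReal.ofReal (f n x)) atTop = 1 := by
      intro x
      refine Tendsto.liminf_eq (tendsto_const_nhds.congr' ?_)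
      have : Tendsto (fun n => |c n * x|) atTop (nhds 0) := by
        simpa using (hc0.mul_const x).abs
      filter_upwards [this.eventually_le_const one_pos] with n hn
      simp [f, hψ1 _ hn]
    have := lintegral_liminf_le (μ := μ) (u := atTop) (f := fun n x => ENNReal.ofReal (f n x))
      fun n => (hfs n).continuous.measurable.ennreal_ofReal
    simpa [hpt, hlim'.liminf_eq] using this
  · refine le_of_tendsto' hlim' fun n => ?_
    calc ∫⁻ x, ENNReal.ofReal (f n x) ∂μ ≤ ∫⁻ _, 1 ∂μ :=
          lintegral_mono fun x => by simpa [f] using ψ.le_one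
      _ = μ Set.univ := by simp
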